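/- arXiv:2105.03771 — 5 statements merged into one kernel-verified Lean document; each statement's English description precedes it below -/
import Mathlib

section
/- Let p be a prime and n, m natural numbers with 0 < n ≤ m. Then m = p^s·n for some s ∈ ℕ if and only if there exists a nonzero formal power series a ∈ 𝔽_p[[t]] such that, in the field of formal Laurent series 𝔽_p((t)), one has t^{−m} − t^{−n} = a^{−p} − a^{−1}. -/
/-!
Work modulo the image of the Artin–Schreier map `℘ x = x ^ p - x`. Since `x ^ p ≡ x`, the power
`t ^ (-m)` is congruent to `t ^ (-i)`, where `i` is the prime-to-`p` part of `m`. A value of `℘`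
with a pole has pole order divisible by `p`, so `t ^ (-i)` and `t ^ (-j)` are incongruent for
distinct `i`, `j` that are zero or prime to `p`. Hence `t ^ (-m) ≡ t ^ (-n)` exactly when `m` and
`n` have the same prime-to-`p` part. If moreover `n < m`, then a solution `b` of
`℘ b = t ^ (-m) - t ^ (-n)` has a pole, so `b⁻¹` is a power series.
-/

open WithZero

theorem exists_eq_pow_mul_iff_ordCompl_eq {p : ℕ} (hp : p.Prime) {m n : ℕ} (hnm : n ≤ m) :
    (∃ s : ℕ, m = p ^ s * n) ↔ ordCompl[p] m = ordCompl[p] n := by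
  refine ⟨fun ⟨s, hs⟩ ↦ hs ▸ Nat.ordCompl_self_pow_mul n s hp, fun h ↦ ?_⟩
  rcases Nat.eq_zero_or_pos n with rfl | hn
  · have hm : m = 0 := by simpa [h] using (Nat.ordProj_mul_ordCompl_eq_self m p).symm
    exact ⟨0, by simp [hm]⟩
  have hm_eq : p ^ m.factorization p * ordCompl[p] n = m :=
    h ▸ Nat.ordProj_mul_ordCompl_eq_self m p
  have hn_eq : p ^ n.factorization p * ordCompl[p] n = n := Nat.ordProj_mul_ordCompl_eq_self n p
  have hexp : n.factorization p ≤ m.factorization p := by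
    refine (Nat.pow_le_pow_iff_right hp.one_lt).mp ?_
    exact Nat.le_of_mul_le_mul_right (by rwa [hm_eq, hn_eq]) (Nat.ordCompl_pos p hn.ne')
  refine ⟨m.factorization p - n.factorization p, ?_⟩
  calc m = p ^ m.factorization p * ordCompl[p] n := hm_eq.symm
    _ = p ^ (m.factorization p - n.factorization p) *
          (p ^ n.factorization p * ordCompl[p] n) := by
        rw [← mul_assoc, ← pow_add, Nat.sub_add_cancel hexp]
    _ = p ^ (m.factorization p - n.factorization p) * n := by rw [hn_eq]

section ArtinSchreier

variable (R : Type*) [CommRing R] (p : ℕ) [ExpChar R p]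

/-- The Artin–Schreier map `x ↦ x ^ p - x` of a commutative ring of exponential characteristic `p`,
bundled as an additive homomorphism so that its image is an additive subgroup. -/
def artinSchreier : R →+ R :=
  (frobenius R p : R →+ R) - AddMonoidHom.id R

variable {R}

theorem artinSchreier_apply (x : R) : artinSchreier R p x = x ^ p - x := rfl

theorem pow_expChar_pow_sub_self_mem_range_artinSchreier (x : R) (k : ℕ) :
    x ^ p ^ k - x ∈ (artinSchreier R p).range := by
  induction k with
  | zero => simp
  | succ k ih =>
    have hstep : x ^ p ^ (k + 1) - x ^ p ^ k ∈ (artinSchreier R p).range :=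
      ⟨x ^ p ^ k, by rw [artinSchreier_apply, ← pow_mul, pow_succ]⟩
    simpa using add_mem hstep ih

theorem pow_sub_pow_ordCompl_mem_range_artinSchreier (x : R) (m : ℕ) :
    x ^ m - x ^ ordCompl[p] m ∈ (artinSchreier R p).range := by
  have h := pow_expChar_pow_sub_self_mem_range_artinSchreier p (x ^ ordCompl[p] m)
    (m.factorization p)
  rwa [← pow_mul, mul_comm, Nat.ordProj_mul_ordCompl_eq_self] at h

theorem pow_sub_pow_mem_range_artinSchreier_iff_ordCompl (x : R) (m n : ℕ) :
    x ^ m - x ^ n ∈ (artinSchreier R p).range ↔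
      x ^ ordCompl[p] m - x ^ ordCompl[p] n ∈ (artinSchreier R p).range := by
  have h := sub_mem (pow_sub_pow_ordCompl_mem_range_artinSchreier p x m)
    (pow_sub_pow_ordCompl_mem_range_artinSchreier p x n)
  rw [sub_sub_sub_comm] at h
  exact ⟨fun hmn ↦ by simpa using sub_mem hmn h, fun hmn ↦ by simpa using add_mem h hmn⟩

end ArtinSchreier

section Valuation

variable {R Γ₀ : Type*} [Ring R] [LinearOrderedCommGroupWithZero Γ₀]

theorem one_lt_valuation_of_one_lt_valuation_pow_sub_self (v : Valuation R Γ₀) {q : ℕ} {x : R}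
    (h : 1 < v (x ^ q - x)) : 1 < v x := by
  contrapose! h
  exact v.map_sub_le (by rw [map_pow]; exact pow_le_one' h q) h

theorem valuation_pow_sub_self (v : Valuation R Γ₀) {q : ℕ} (hq : 1 < q) {x : R} (hx : 1 < v x) :
    v (x ^ q - x) = v x ^ q := by
  have hlt : v x < v (x ^ q) := by
    rw [map_pow]
    exact lt_self_pow₀ hx hq
  rw [v.map_sub_eq_of_lt_left hlt, map_pow]

theorem dvd_of_valuation_pow_sub_self_eq_exp (v : Valuation R ℤᵐ⁰) {q : ℕ} (hq : 1 < q) {x : R}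
    {i : ℤ} (hi : 0 < i) (h : v (x ^ q - x) = exp i) : (q : ℤ) ∣ i := by
  have hx : 1 < v x := one_lt_valuation_of_one_lt_valuation_pow_sub_self v
    (by rwa [h, ← exp_zero, exp_lt_exp])
  have hlog : log (v x ^ q) = i := by
    rw [← valuation_pow_sub_self v hq hx, h, log_exp]
  exact ⟨log (v x), by rw [← hlog, log_pow, nsmul_eq_mul]⟩

theorem valuation_pow_sub_pow_of_lt (v : Valuation R ℤᵐ⁰) {u : R} (hu : v u = exp 1) {i j : ℕ}
    (hji : j < i) : v (u ^ i - u ^ j) = exp (i : ℤ) := by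
  have hpow (k : ℕ) : v (u ^ k) = exp (k : ℤ) := by
    rw [map_pow, hu, ← exp_nsmul, nsmul_one]
  rw [v.map_sub_eq_of_lt_left, hpow]
  rwa [hpow, hpow, exp_lt_exp, Nat.cast_lt]

end Valuation

section PoleOrders

variable {R : Type*} [CommRing R] {p : ℕ} [Fact p.Prime] [CharP R p]

theorem dvd_of_pow_sub_pow_mem_range_artinSchreier (v : Valuation R ℤᵐ⁰) {u : R}
    (hu : v u = exp 1) {i j : ℕ} (hji : j < i)
    (h : u ^ i - u ^ j ∈ (artinSchreier R p).range) : p ∣ i := by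
  obtain ⟨b, hb⟩ := h
  rw [artinSchreier_apply] at hb
  have hval : v (b ^ p - b) = exp (i : ℤ) := hb ▸ valuation_pow_sub_pow_of_lt v hu hji
  exact_mod_cast dvd_of_valuation_pow_sub_self_eq_exp v (Fact.out : p.Prime).one_lt
    (by omega) hval

theorem ordCompl_le_of_pow_sub_pow_mem_range_artinSchreier (v : Valuation R ℤᵐ⁰) {u : R}
    (hu : v u = exp 1) {m n : ℕ} (h : u ^ m - u ^ n ∈ (artinSchreier R p).range) :
    ordCompl[p] m ≤ ordCompl[p] n := by
  rw [pow_sub_pow_mem_range_artinSchreier_iff_ordCompl] at h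
  by_contra! hlt
  have hm : m ≠ 0 := by
    rintro rfl
    simp at hlt
  exact Nat.not_dvd_ordCompl Fact.out hm (dvd_of_pow_sub_pow_mem_range_artinSchreier v hu hlt h)

theorem pow_sub_pow_mem_range_artinSchreier_iff (v : Valuation R ℤᵐ⁰) {u : R}
    (hu : v u = exp 1) (m n : ℕ) :
    u ^ m - u ^ n ∈ (artinSchreier R p).range ↔ ordCompl[p] m = ordCompl[p] n := by
  refine ⟨fun h ↦ le_antisymm ?_ ?_, fun h ↦ ?_⟩
  · exact ordCompl_le_of_pow_sub_pow_mem_range_artinSchreier v hu h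
  · exact ordCompl_le_of_pow_sub_pow_mem_range_artinSchreier v hu (sub_mem_comm_iff.mp h)
  · rw [pow_sub_pow_mem_range_artinSchreier_iff_ordCompl, h, sub_self]
    exact zero_mem _

end PoleOrders

section LaurentSeries

open scoped LaurentSeries PowerSeries

variable {k : Type*} [Field k]

theorem charP_laurentSeries (p : ℕ) [CharP k p] : CharP k⸨X⸩ p :=
  charP_of_injective_ringHom (HahnSeries.C_injective (Γ := ℤ) (R := k)) p

theorem valuation_inv_coe_X :
    Valued.v (((PowerSeries.X : k⟦X⟧) : k⸨X⸩)⁻¹) = (exp 1 : ℤᵐ⁰) := by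
  rw [PowerSeries.coe_X, ← zpow_neg_one, ← RatFunc.single_zpow,
    LaurentSeries.valuation_single_zpow, neg_neg]

theorem exists_powerSeries_inv_eq_of_one_lt_valuation {b : k⸨X⸩} (hb : (1 : ℤᵐ⁰) < Valued.v b) :
    ∃ a : k⟦X⟧, a ≠ 0 ∧ (a : k⸨X⸩)⁻¹ = b := by
  have hb_inv : Valued.v b⁻¹ ≤ (1 : ℤᵐ⁰) := by
    rw [map_inv₀]
    exact inv_le_one_of_one_le₀ hb.le
  obtain ⟨a, ha⟩ := (LaurentSeries.val_le_one_iff_eq_coe k b⁻¹).mp hb_inv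
  refine ⟨a, ?_, by rw [ha, inv_inv]⟩
  rintro rfl
  have hb_zero : b = 0 := by simpa using ha.symm
  simp [hb_zero] at hb

theorem exists_powerSeries_inv_iff_mem_range_artinSchreier (p : ℕ) [ExpChar k⸨X⸩ p] {u : k⸨X⸩}
    (hu : Valued.v u = (exp 1 : ℤᵐ⁰)) {m n : ℕ} (hnm : n ≤ m) :
    (∃ a : k⟦X⟧, a ≠ 0 ∧ u ^ m - u ^ n = (a : k⸨X⸩)⁻¹ ^ p - (a : k⸨X⸩)⁻¹) ↔
      u ^ m - u ^ n ∈ (artinSchreier k⸨X⸩ p).range := by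
  refine ⟨fun ⟨a, _, ha⟩ ↦ ⟨(a : k⸨X⸩)⁻¹, ha.symm⟩, ?_⟩
  rintro ⟨b, hb⟩
  rw [artinSchreier_apply] at hb
  rcases hnm.eq_or_lt with rfl | hlt
  · exact ⟨1, one_ne_zero, by simp⟩
  have hval : (1 : ℤᵐ⁰) < Valued.v (b ^ p - b) := by
    rw [hb, valuation_pow_sub_pow_of_lt _ hu hlt, ← exp_zero, exp_lt_exp]
    omega
  obtain ⟨a, ha, rfl⟩ := exists_powerSeries_inv_eq_of_one_lt_valuation
    (one_lt_valuation_of_one_lt_valuation_pow_sub_self _ hval)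
  exact ⟨a, ha, hb.symm⟩

theorem stmt3_general (p : ℕ) [Fact p.Prime] [CharP k p] {n m : ℕ} (hnm : n ≤ m) :
    (∃ s : ℕ, m = p ^ s * n) ↔
      ∃ a : k⟦X⟧, a ≠ 0 ∧
        ((PowerSeries.X : k⟦X⟧) : k⸨X⸩) ^ (-(m : ℤ)) -
          ((PowerSeries.X : k⟦X⟧) : k⸨X⸩) ^ (-(n : ℤ)) =
        (a : k⸨X⸩)⁻¹ ^ p - (a : k⸨X⸩)⁻¹ := by
  have := charP_laurentSeries (k := k) p
  simp only [zpow_neg, zpow_natCast, ← inv_pow]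
  rw [exists_powerSeries_inv_iff_mem_range_artinSchreier p valuation_inv_coe_X hnm,
    pow_sub_pow_mem_range_artinSchreier_iff _ valuation_inv_coe_X,
    exists_eq_pow_mul_iff_ordCompl_eq Fact.out hnm]

end LaurentSeries

theorem stmt3 (p : ℕ) [Fact p.Prime] (n m : ℕ) (hn : 0 < n) (hnm : n ≤ m) :
    (∃ s : ℕ, m = p ^ s * n) ↔
      ∃ a : PowerSeries (ZMod p), a ≠ 0 ∧
        ((PowerSeries.X : PowerSeries (ZMod p)) : LaurentSeries (ZMod p)) ^ (-(m : ℤ)) -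
          ((PowerSeries.X : PowerSeries (ZMod p)) : LaurentSeries (ZMod p)) ^ (-(n : ℤ)) =
        ((a : LaurentSeries (ZMod p))⁻¹) ^ p - (a : LaurentSeries (ZMod p))⁻¹ :=
  stmt3_general p hnm
end

section
/- Let p be a prime, n ≥ 1 and s ≥ 1 natural numbers, and set m = p^s·n. In 𝔽_p((t)), let b = t^{−n·p^{s−1}} + t^{−n·p^{s−2}} + … + t^{−n} (i.e. b = Σ_{i=0}^{s−1} t^{−n·p^i}). Then b ≠ 0, b^p − b = t^{−m} − t^{−n}, and the t-adic valuation of b⁻¹ equals n·p^{s−1} > 0; in particular a := b⁻¹ is a formal power series with positive order satisfying t^{−m} − t^{−n} = a^{−p} − a^{−1}. -/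
/-!
Put `x = t⁻ⁿ`, so that `b = ∑_{i < s} x ^ p ^ i`. In characteristic `p` the Frobenius map shifts the
summands by one, so `b ^ p - b` telescopes to `x ^ p ^ s - x`. As `x` has negative order, the orders
of the summands strictly decrease and the last one determines the order of `b`.
-/

open Finset

theorem sum_pow_char_pow_pow_char_sub {R : Type*} [CommRing R] (p : ℕ) [ExpChar R p] (x : R)
    (s : ℕ) : (∑ i ∈ range s, x ^ p ^ i) ^ p - ∑ i ∈ range s, x ^ p ^ i = x ^ p ^ s - x := by
  calc (∑ i ∈ range s, x ^ p ^ i) ^ p - ∑ i ∈ range s, x ^ p ^ i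
      = ∑ i ∈ range s, (x ^ p ^ (i + 1) - x ^ p ^ i) := by
        simp only [sum_pow_char, ← pow_mul, ← pow_succ, sum_sub_distrib]
    _ = x ^ p ^ s - x := by rw [sum_range_sub (fun i ↦ x ^ p ^ i), pow_zero, pow_one]

section HahnSeries

open HahnSeries

theorem hahnSeries_ne_zero_of_order_ne_zero {Γ R : Type*} [PartialOrder Γ] [Zero Γ] [Zero R]
    {x : HahnSeries Γ R} (hx : x.order ≠ 0) : x ≠ 0 := by
  rintro rfl
  exact hx order_zero

theorem hahnSeries_order_inv {Γ K : Type*} [AddCommGroup Γ] [LinearOrder Γ] [IsOrderedAddMonoid Γ]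
    [Field K] (x : HahnSeries Γ K) : x⁻¹.order = -x.order := by
  rcases eq_or_ne x 0 with rfl | hx
  · simp
  · refine eq_neg_of_add_eq_zero_left ?_
    rw [← order_mul (inv_ne_zero hx) hx, inv_mul_cancel₀ hx, order_one]

theorem orderTop_sum_range_succ_of_strictAnti {Γ R : Type*} [LinearOrder Γ] [AddCommMonoid R]
    {f : ℕ → HahnSeries Γ R} (hf : StrictAnti fun i ↦ (f i).orderTop) (k : ℕ) :
    (∑ i ∈ range (k + 1), f i).orderTop = (f k).orderTop := by
  induction k with
  | zero => rw [sum_range_one]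
  | succ k ih =>
    rw [sum_range_succ, orderTop_add_eq_right]
    rw [ih]
    exact hf k.lt_succ_self

variable {Γ R : Type*} [AddCommMonoid Γ] [LinearOrder Γ] [IsOrderedCancelAddMonoid Γ]
  [Semiring R] [NoZeroDivisors R] {x : HahnSeries Γ R}

theorem strictAnti_orderTop_pow (hx : x.order < 0) : StrictAnti fun k : ℕ ↦ (x ^ k).orderTop := by
  have hx0 : x ≠ 0 := hahnSeries_ne_zero_of_order_ne_zero hx.ne
  intro i j hij
  simp only [← order_eq_orderTop_of_ne_zero (pow_ne_zero _ hx0), order_pow, WithTop.coe_lt_coe]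
  exact nsmul_lt_nsmul_left (M := Γᵒᵈ) hx hij

theorem order_sum_range_succ_pow_pow (hx : x.order < 0) {q : ℕ} (hq : 1 < q) (k : ℕ) :
    (∑ i ∈ range (k + 1), x ^ q ^ i).order = q ^ k • x.order := by
  have hpow : x ^ q ^ k ≠ 0 := pow_ne_zero _ (hahnSeries_ne_zero_of_order_ne_zero hx.ne)
  have horderTop : (∑ i ∈ range (k + 1), x ^ q ^ i).orderTop = (x ^ q ^ k).orderTop :=
    orderTop_sum_range_succ_of_strictAnti
      ((strictAnti_orderTop_pow hx).comp_strictMono (pow_right_strictMono₀ hq)) k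
  have hsum : ∑ i ∈ range (k + 1), x ^ q ^ i ≠ 0 := by
    rwa [← orderTop_ne_top, horderTop, orderTop_ne_top]
  rw [← order_pow, ← WithTop.coe_inj, order_eq_orderTop_of_ne_zero hsum, horderTop,
    order_eq_orderTop_of_ne_zero hpow]

end HahnSeries

theorem exists_powerSeries_coe_eq_of_order_eq {R : Type*} [Semiring R] {f : LaurentSeries R} {n : ℕ}
    (hf : f.order = n) : ∃ a : PowerSeries R, (a : LaurentSeries R) = f ∧ n ≤ a.order := by
  refine ⟨_, LaurentSeries.X_order_mul_powerSeriesPart hf.symm, ?_⟩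
  refine PowerSeries.nat_le_order _ _ fun i hi ↦ ?_
  rw [PowerSeries.coeff_X_pow_mul', if_neg hi.not_ge]

theorem laurentSeries_order_X_zpow {K : Type*} [Field K] (k : ℤ) :
    (((PowerSeries.X : PowerSeries K) : LaurentSeries K) ^ k).order = k := by
  rw [PowerSeries.coe_X, ← RatFunc.single_zpow, HahnSeries.order_single one_ne_zero]

theorem stmt4_general {K : Type*} [Field K] (p : ℕ) [Fact p.Prime] [CharP K p] (n s : ℕ)
    (hn : 1 ≤ n) (hs : 1 ≤ s) (m : ℕ) (hm : m = p ^ s * n) (b : LaurentSeries K)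
    (hb : b = ∑ i ∈ range s,
      ((PowerSeries.X : PowerSeries K) : LaurentSeries K) ^ (-((n : ℤ) * (p : ℤ) ^ i))) :
    b ≠ 0 ∧
    b ^ p - b =
      ((PowerSeries.X : PowerSeries K) : LaurentSeries K) ^ (-(m : ℤ)) -
        ((PowerSeries.X : PowerSeries K) : LaurentSeries K) ^ (-(n : ℤ)) ∧
    (b⁻¹).order = (n : ℤ) * (p : ℤ) ^ (s - 1) ∧
    0 < (b⁻¹).order ∧
    ∃ a : PowerSeries K, (a : LaurentSeries K) = b⁻¹ ∧ 0 < a.order ∧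
      ((PowerSeries.X : PowerSeries K) : LaurentSeries K) ^ (-(m : ℤ)) -
        ((PowerSeries.X : PowerSeries K) : LaurentSeries K) ^ (-(n : ℤ)) =
      ((a : LaurentSeries K)⁻¹) ^ p - (a : LaurentSeries K)⁻¹ := by
  have hp : p.Prime := Fact.out
  have : CharP (LaurentSeries K) p := charP_of_injective_ringHom HahnSeries.C_injective p
  obtain ⟨k, rfl⟩ : ∃ k, s = k + 1 := ⟨s - 1, by omega⟩
  set t : LaurentSeries K := ((PowerSeries.X : PowerSeries K) : LaurentSeries K)
  have hpow (i : ℕ) : t ^ (-((n : ℤ) * (p : ℤ) ^ i)) = (t ^ (-(n : ℤ))) ^ p ^ i := by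
    rw [← zpow_natCast, ← zpow_mul, Nat.cast_pow, neg_mul]
  have hb_sum : b = ∑ i ∈ range (k + 1), (t ^ (-(n : ℤ))) ^ p ^ i := by simp only [hb, hpow]
  have hm_pow : t ^ (-(m : ℤ)) = (t ^ (-(n : ℤ))) ^ p ^ (k + 1) := by
    rw [← hpow, hm, Nat.cast_mul, Nat.cast_pow, mul_comm]
  have hroot : b ^ p - b = t ^ (-(m : ℤ)) - t ^ (-(n : ℤ)) := by
    rw [hb_sum, hm_pow, sum_pow_char_pow_pow_char_sub]
  have ht_order : (t ^ (-(n : ℤ))).order = -n := laurentSeries_order_X_zpow _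
  have horder : b⁻¹.order = (n * p ^ k : ℕ) := by
    rw [hahnSeries_order_inv, hb_sum, order_sum_range_succ_pow_pow (by omega) hp.one_lt, ht_order]
    simp [mul_comm]
  have hpos : 0 < n * p ^ k := Nat.mul_pos hn (pow_pos hp.pos k)
  have horder_pos : 0 < b⁻¹.order := by rw [horder]; exact_mod_cast hpos
  obtain ⟨a, ha, ha_order⟩ := exists_powerSeries_coe_eq_of_order_eq horder
  exact ⟨inv_eq_zero.not.mp (hahnSeries_ne_zero_of_order_ne_zero horder_pos.ne'), hroot,
    by simpa using horder, horder_pos, a, ha, (Nat.cast_pos.mpr hpos).trans_le ha_order,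
    by rw [ha, inv_inv, hroot]⟩

theorem stmt4 (p : ℕ) [Fact p.Prime] (n s : ℕ) (hn : 1 ≤ n) (hs : 1 ≤ s)
    (m : ℕ) (hm : m = p ^ s * n)
    (b : LaurentSeries (ZMod p))
    (hb : b = ∑ i ∈ Finset.range s,
      ((PowerSeries.X : PowerSeries (ZMod p)) : LaurentSeries (ZMod p)) ^
        (-((n : ℤ) * (p : ℤ) ^ i))) :
    b ≠ 0 ∧
    b ^ p - b =
      ((PowerSeries.X : PowerSeries (ZMod p)) : LaurentSeries (ZMod p)) ^ (-(m : ℤ)) -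
        ((PowerSeries.X : PowerSeries (ZMod p)) : LaurentSeries (ZMod p)) ^ (-(n : ℤ)) ∧
    (b⁻¹).order = (n : ℤ) * (p : ℤ) ^ (s - 1) ∧
    0 < (b⁻¹).order ∧
    ∃ a : PowerSeries (ZMod p), (a : LaurentSeries (ZMod p)) = b⁻¹ ∧ 0 < a.order ∧
      ((PowerSeries.X : PowerSeries (ZMod p)) : LaurentSeries (ZMod p)) ^ (-(m : ℤ)) -
        ((PowerSeries.X : PowerSeries (ZMod p)) : LaurentSeries (ZMod p)) ^ (-(n : ℤ)) =
      ((a : LaurentSeries (ZMod p))⁻¹) ^ p - (a : LaurentSeries (ZMod p))⁻¹ :=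
  stmt4_general p n s hn hs m hm b hb
end

section
/- Let p be a prime and n, m, N natural numbers with 0 < n ≤ m and 3m < N. Let R = 𝔽_p[t]/(t^N) and write t for the residue class of the variable in R. Then m = p^s·n for some s ∈ ℕ if and only if there exists α ∈ R such that α^p·(t^n − t^m) = t^n·t^m·(1 − α^{p−1}) and α^{3p} ≠ 0 in R. -/
open Polynomial

/-!
For an invertible `α` with inverse `β`, dividing the equation by `α ^ p * t ^ n * t ^ m` turns it
into the Artin–Schreier equation `β ^ p - β = t⁻¹ ^ m - t⁻¹ ^ n`.

If `m = p ^ s * n`, it is solved by the telescoping sum `β = ∑ i < s, t⁻¹ ^ (p ^ i * n)`.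
Conversely, over a residue field `K` of the coefficient ring, a solution modulo `t ^ N` gives an
element `β` of `K(t)` that satisfies the equation up to a term regular at `t = 0`. If `n < m`,
comparing pole orders shows that `m = p * k`, and subtracting `t⁻¹ ^ k` from `β` replaces the pair
of exponents `(m, n)` by `(k, n)`; this descent ends only when the two exponents agree.
-/

section Solution

variable {R : Type*} [CommRing R] {p : ℕ} [Fact p.Prime] [CharP R p] {t : R} {n : ℕ}

-- `W` is `t ^ (p ^ r * n) * β`, where `β` is the telescoping sum with `s = r + 1` terms.
theorem exists_isUnit_pow_sub_mul_eq (ht : IsNilpotent t) (hn : 0 < n) (r : ℕ) :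
    ∃ W : R, IsUnit W ∧
      t ^ n * (W ^ p - t ^ (p ^ r * n * (p - 1)) * W) = t ^ n - t ^ (p ^ (r + 1) * n) := by
  have hp : p.Prime := Fact.out
  obtain ⟨q, rfl⟩ : ∃ q, p = q + 1 := ⟨p - 1, by have := hp.pos; omega⟩
  simp only [Nat.add_sub_cancel]
  induction r with
  | zero => exact ⟨1, isUnit_one, by ring⟩
  | succ r ih =>
    obtain ⟨W, -, hW⟩ := ih
    have hexp : (q + 1) ^ r * n * q ≠ 0 := by
      have := hp.one_lt
      exact mul_ne_zero (by positivity) (by omega)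
    refine ⟨1 + t ^ ((q + 1) ^ r * n * q) * W, ?_, ?_⟩
    · exact ((Commute.all _ W).isNilpotent_mul_right (ht.pow_of_pos hexp)).isUnit_one_add
    · rw [add_pow_char, one_pow, mul_pow]
      linear_combination t ^ ((q + 1) ^ (r + 1) * n * q) * hW

theorem exists_solution_associated (ht : IsNilpotent t) (hn : 0 < n) (r : ℕ) :
    ∃ α : R, α ^ p * (t ^ n - t ^ (p ^ (r + 1) * n)) =
        t ^ n * t ^ (p ^ (r + 1) * n) * (1 - α ^ (p - 1)) ∧
      Associated (t ^ (p ^ (r + 1) * n)) (α ^ p) := by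
  obtain ⟨_, ⟨W, rfl⟩, hW⟩ := exists_isUnit_pow_sub_mul_eq (p := p) ht hn r
  have hpow : (t ^ (p ^ r * n) * ↑W⁻¹) ^ p = t ^ (p ^ (r + 1) * n) * ↑(W⁻¹ ^ p) := by
    rw [mul_pow, ← pow_mul, Units.val_pow_eq_pow_val]
    ring_nf
  refine ⟨t ^ (p ^ r * n) * ↑W⁻¹, ?_, W⁻¹ ^ p, hpow.symm⟩
  have hinv : (W : R) ^ p * (↑W⁻¹ : R) ^ p = 1 := by rw [← mul_pow, W.mul_inv, one_pow]
  have hinv' : (W : R) * (↑W⁻¹ : R) ^ p = (↑W⁻¹ : R) ^ (p - 1) := by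
    rw [← mul_pow_sub_one (Fact.out : p.Prime).ne_zero, ← mul_assoc, W.mul_inv, one_mul]
  rw [hpow, ← hW, Units.val_pow_eq_pow_val, mul_pow, ← pow_mul]
  linear_combination t ^ (p ^ (r + 1) * n) * t ^ n * (hinv - t ^ (p ^ r * n * (p - 1)) * hinv')

theorem exists_solution_pow_ne_zero (ht : IsNilpotent t) {k : ℕ} (s : ℕ)
    (hk : t ^ (k * (p ^ s * n)) ≠ 0) :
    ∃ α : R, α ^ p * (t ^ n - t ^ (p ^ s * n)) = t ^ n * t ^ (p ^ s * n) * (1 - α ^ (p - 1)) ∧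
      α ^ (k * p) ≠ 0 := by
  have : Nontrivial R := nontrivial_of_ne _ _ hk
  rcases s with _ | r
  · exact ⟨1, by simp, by simp⟩
  rcases n.eq_zero_or_pos with rfl | hn
  · exact ⟨1, by simp, by simp⟩
  obtain ⟨α, hα, hassoc⟩ := exists_solution_associated (p := p) ht hn r
  refine ⟨α, hα, ?_⟩
  rwa [mul_comm, pow_mul, ← (hassoc.pow_pow (n := k)).ne_zero_iff, ← pow_mul, mul_comm]

end Solution

section Descent

open WithZero

variable {L : Type*} [CommRing L] {p m n : ℕ} {y β : L}

theorem valuation_pow_eq_of_one_lt_pow_sub_self {Γ₀ : Type*} [LinearOrderedCommGroupWithZero Γ₀]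
    {v : Valuation L Γ₀} (hp : 1 < p) (hβ : 1 < v (β ^ p - β)) : v (β ^ p - β) = v β ^ p := by
  have hβ_one : 1 < v β := by
    by_contra! hle
    exact hβ.not_ge (v.map_sub_le (by simpa using pow_le_one' hle p) hle)
  rw [v.map_sub_eq_of_lt_left, map_pow]
  simpa using pow_lt_pow_right₀ hβ_one hp

variable {v : Valuation L ℤᵐ⁰}

theorem dvd_of_valuation_artinSchreier_le_one (hp : 1 < p) (hy : v y = exp 1) (hnm : n < m)
    (h : v (β ^ p - β - (y ^ m - y ^ n)) ≤ 1) : p ∣ m := by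
  have hy_one : 1 < v y := by simp [hy, ← exp_zero]
  have hpole : v (y ^ m - y ^ n) = v y ^ m := by
    rw [v.map_sub_eq_of_lt_left, map_pow]
    simpa using pow_lt_pow_right₀ hy_one hnm
  have hm : 1 < v y ^ m := one_lt_pow₀ hy_one (by omega)
  have hsub : v (β ^ p - β) = v y ^ m := by
    rw [← hpole]
    exact v.map_eq_of_sub_lt (by rw [hpole]; exact h.trans_lt hm)
  have hval : v β ^ p = exp (m : ℤ) := by
    rw [← valuation_pow_eq_of_one_lt_pow_sub_self hp (hsub ▸ hm), hsub, hy, ← exp_nsmul]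
    simp
  have hlog : (p : ℤ) * log (v β) = m := by
    simpa using congrArg log hval
  exact Int.natCast_dvd_natCast.mp ⟨_, hlog.symm⟩

theorem eq_pow_mul_or_eq_pow_mul_of_valuation_artinSchreier_le_one [Fact p.Prime] [CharP L p]
    (hy : v y = exp 1) (h : v (β ^ p - β - (y ^ m - y ^ n)) ≤ 1) :
    (∃ s, m = p ^ s * n) ∨ ∃ s, n = p ^ s * m := by
  have hp : 1 < p := (Fact.out : p.Prime).one_lt
  induction hsum : m + n using Nat.strong_induction_on generalizing m n β with
  | _ d ih =>
  wlog hnm : n ≤ m generalizing m n β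
  · refine (this (β := 0 - β) ?_ (by omega) (by omega)).symm
    rw [sub_pow_char, zero_pow (by omega), ← v.map_neg]
    convert h using 2
    ring
  rcases hnm.eq_or_lt with rfl | hlt
  · exact .inl ⟨0, by simp⟩
  obtain ⟨k, rfl⟩ := dvd_of_valuation_artinSchreier_le_one hp hy hlt h
  have hkm : k < p * k := lt_mul_left (Nat.pos_of_mul_pos_left (by omega : 0 < p * k)) hp
  have hdescent : v ((β - y ^ k) ^ p - (β - y ^ k) - (y ^ k - y ^ n)) ≤ 1 := by
    rw [sub_pow_char]
    convert h using 2
    ring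
  rcases ih (k + n) (by omega) hdescent rfl with ⟨s, hs⟩ | ⟨_ | s, hs⟩
  · exact .inl ⟨s + 1, by rw [hs]; ring⟩
  · exact .inl ⟨1, by rw [hs]; ring⟩
  · exact .inr ⟨s, by rw [hs]; ring⟩

end Descent

section Defect

/-- The difference of the two sides of the equation for `α = a`. Up to sign and the factor
`a ^ p * t ^ (n + m)`, it is the defect of `a⁻¹` in the Artin–Schreier equation
`β ^ p - β = t⁻¹ ^ m - t⁻¹ ^ n`, written without inverses so that it makes sense in any ring. -/
def artinSchreierDefect {R : Type*} [CommRing R] (p n m : ℕ) (t a : R) : R :=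
  a ^ p * (t ^ n - t ^ m) - t ^ n * t ^ m * (1 - a ^ (p - 1))

theorem map_artinSchreierDefect {R S : Type*} [CommRing R] [CommRing S] (f : R →+* S)
    (p n m : ℕ) (t a : R) :
    f (artinSchreierDefect p n m t a) = artinSchreierDefect p n m (f t) (f a) := by
  simp only [artinSchreierDefect, map_sub, map_mul, map_pow, map_one]

variable {L Γ₀ : Type*} [LinearOrderedCommGroupWithZero Γ₀] {p m n : ℕ}

theorem valuation_pow_le_of_valuation_artinSchreierDefect_lt [CommRing L] {v : Valuation L Γ₀}
    {t a : L} (hp : 1 < p) (hnm : n ≤ m) (ht : v t ≤ 1)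
    (h : v (artinSchreierDefect p n m t a) < v t ^ (n + m)) :
    v t ^ m ≤ v a ^ p := by
  by_contra! hlt
  have ha : v a < 1 := by
    by_contra! hle
    exact (hlt.trans_le (pow_le_one' ht m)).not_ge (one_le_pow₀ hle)
  have hright : v (t ^ n * t ^ m * (1 - a ^ (p - 1))) = v t ^ (n + m) := by
    have : v (a ^ (p - 1)) < 1 := by
      simpa using pow_lt_one₀ zero_le ha (by omega)
    simp [v.map_one_sub_of_lt this, pow_add]
  have hleft : v (a ^ p * (t ^ n - t ^ m)) < v t ^ (n + m) := by
    have htn : 0 < v t ^ n := by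
      refine zero_lt_iff.mpr fun h0 => ?_
      simp [pow_add, h0] at h
    have hdiff : v (t ^ n - t ^ m) ≤ v t ^ n :=
      v.map_sub_le (by simp) (by simpa using pow_le_pow_right_of_le_one' ht hnm)
    calc v (a ^ p * (t ^ n - t ^ m)) = v a ^ p * v (t ^ n - t ^ m) := by simp
      _ ≤ v a ^ p * v t ^ n := by gcongr
      _ < v t ^ m * v t ^ n := by gcongr
      _ = v t ^ (n + m) := by rw [add_comm, pow_add]
  rw [artinSchreierDefect, v.map_sub_eq_of_lt_right (hleft.trans_eq hright.symm), hright] at h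
  exact h.false

theorem valuation_artinSchreier_inv_le_one [Field L] {v : Valuation L Γ₀} {t a : L} (hp : 0 < p)
    (ht : t ≠ 0) (ha : v t ^ m ≤ v a ^ p)
    (h : v (artinSchreierDefect p n m t a) ≤ v t ^ (n + m + m)) :
    v (a⁻¹ ^ p - a⁻¹ - (t⁻¹ ^ m - t⁻¹ ^ n)) ≤ 1 := by
  have ha0 : a ≠ 0 := by
    rintro rfl
    simp [hp.ne', ht] at ha
  have hfrac : a⁻¹ ^ p - a⁻¹ - (t⁻¹ ^ m - t⁻¹ ^ n) =
      -(artinSchreierDefect p n m t a / (t ^ (n + m) * a ^ p)) := by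
    obtain ⟨q, rfl⟩ : ∃ q, p = q + 1 := ⟨p - 1, by omega⟩
    simp only [artinSchreierDefect, Nat.add_sub_cancel, inv_pow]
    field_simp
    ring
  rw [hfrac, v.map_neg, map_div₀, map_mul, map_pow, map_pow]
  refine div_le_one_of_le₀ (h.trans ?_) zero_le
  rw [pow_add _ (n + m)]
  gcongr

end Defect

section Truncation

variable {p n m N : ℕ} [Fact p.Prime]

theorem exists_eq_pow_mul_of_X_pow_dvd_of_field {K : Type*} [Field K] [CharP K p] (hnm : n ≤ m)
    (hN : n + m + m < N) {a : K[X]}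
    (h : X ^ N ∣ artinSchreierDefect p n m X a) : ∃ s, m = p ^ s * n := by
  have hp : p.Prime := Fact.out
  have : CharP (RatFunc K) p := charP_of_injective_algebraMap' K p
  let v := (idealX K).valuation (RatFunc K)
  have hX : v RatFunc.X = WithZero.exp (-1) := valuation_X_eq_neg_one K
  have hX_lt : v RatFunc.X < 1 := by simp [hX, ← WithZero.exp_zero, -WithZero.exp_neg]
  have hdefect : v (artinSchreierDefect p n m RatFunc.X (algebraMap K[X] (RatFunc K) a)) ≤
      v RatFunc.X ^ N := by
    obtain ⟨c, hc⟩ := h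
    rw [← RatFunc.algebraMap_X, ← map_artinSchreierDefect, hc, map_mul, map_mul, map_pow, map_pow]
    exact mul_le_of_le_one_right' ((idealX K).valuation_le_one c)
  have ha := valuation_pow_le_of_valuation_artinSchreierDefect_lt hp.one_lt hnm hX_lt.le
    (hdefect.trans_lt (pow_lt_pow_right_of_lt_one₀ (by simp [hX]) hX_lt (by omega)))
  have hinv := valuation_artinSchreier_inv_le_one hp.pos RatFunc.X_ne_zero ha
    (hdefect.trans (pow_le_pow_right_of_le_one' hX_lt.le hN.le))
  rcases eq_pow_mul_or_eq_pow_mul_of_valuation_artinSchreier_le_one (by simp [hX]) hinv with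
    hs | ⟨s, hs⟩
  · exact hs
  · have hmn : m ≤ n := hs ▸ Nat.le_mul_of_pos_left m (pow_pos hp.pos s)
    exact ⟨0, by simpa using hmn.antisymm hnm⟩

theorem charP_of_ringHom_of_prime {A B : Type*} [Ring A] [Ring B] [Nontrivial B] [CharP A p]
    (f : A →+* B) : CharP B p := by
  rw [CharP.charP_iff_prime_eq_zero Fact.out, ← map_natCast f, CharP.cast_eq_zero, map_zero]

variable {A : Type*} [CommRing A] [CharP A p]

theorem exists_eq_pow_mul_of_X_pow_dvd (hnm : n ≤ m) (hN : n + m + m < N) {a : A[X]}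
    (h : X ^ N ∣ artinSchreierDefect p n m X a) : ∃ s, m = p ^ s * n := by
  have hp : p.Prime := Fact.out
  have : Nontrivial A := CharP.nontrivial_of_char_ne_one hp.ne_one
  obtain ⟨M, _⟩ := Ideal.exists_maximal A
  let : Field (A ⧸ M) := Ideal.Quotient.field M
  have : CharP (A ⧸ M) p := charP_of_ringHom_of_prime (Ideal.Quotient.mk M)
  refine exists_eq_pow_mul_of_X_pow_dvd_of_field (a := a.map (Ideal.Quotient.mk M)) hnm hN ?_
  simpa [map_artinSchreierDefect] using map_dvd (mapRingHom (Ideal.Quotient.mk M)) h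

theorem mk_span_X_pow_pow_eq_zero_iff [Nontrivial A] {k : ℕ} :
    Ideal.Quotient.mk (Ideal.span {(X : A[X]) ^ N}) X ^ k = 0 ↔ N ≤ k := by
  rw [← map_pow, Ideal.Quotient.eq_zero_iff_dvd]
  refine ⟨fun h => ?_, pow_dvd_pow X⟩
  by_contra! hk
  simpa using X_pow_dvd_iff.mp h k hk

theorem stmt5_general (hnm : n ≤ m) (hN : 3 * m < N) :
    (∃ s : ℕ, m = p ^ s * n) ↔
      ∃ α : A[X] ⧸ Ideal.span {(X : A[X]) ^ N},
        (letI t := Ideal.Quotient.mk (Ideal.span {(X : A[X]) ^ N}) (X : A[X]);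
          α ^ p * (t ^ n - t ^ m) = t ^ n * t ^ m * (1 - α ^ (p - 1)) ∧
            α ^ (3 * p) ≠ 0) := by
  have : Nontrivial A := CharP.nontrivial_of_char_ne_one (Fact.out : p.Prime).ne_one
  have ht (k : ℕ) : Ideal.Quotient.mk (Ideal.span {(X : A[X]) ^ N}) X ^ k = 0 ↔ N ≤ k :=
    mk_span_X_pow_pow_eq_zero_iff
  constructor
  · rintro ⟨s, rfl⟩
    have hne := (ht (3 * (p ^ s * n))).not.mpr hN.not_ge
    have : Nontrivial (A[X] ⧸ Ideal.span {(X : A[X]) ^ N}) := nontrivial_of_ne _ _ hne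
    have : CharP (A[X] ⧸ Ideal.span {(X : A[X]) ^ N}) p :=
      charP_of_ringHom_of_prime (algebraMap A _)
    exact exists_solution_pow_ne_zero ⟨N, (ht N).mpr le_rfl⟩ s hne
  · rintro ⟨α, hα, -⟩
    obtain ⟨a, rfl⟩ := Ideal.Quotient.mk_surjective α
    refine exists_eq_pow_mul_of_X_pow_dvd (N := N) hnm (by omega) (a := a) ?_
    rw [← Ideal.Quotient.eq_zero_iff_dvd, map_artinSchreierDefect]
    exact sub_eq_zero.mpr hα

end Truncation

theorem stmt5 (p : ℕ) [Fact p.Prime] (n m N : ℕ) (hn : 0 < n) (hnm : n ≤ m)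
    (hN : 3 * m < N) :
    (∃ s : ℕ, m = p ^ s * n) ↔
      ∃ α : Polynomial (ZMod p) ⧸ Ideal.span {(X : Polynomial (ZMod p)) ^ N},
        (letI t := Ideal.Quotient.mk (Ideal.span {(X : Polynomial (ZMod p)) ^ N})
            (X : Polynomial (ZMod p));
          α ^ p * (t ^ n - t ^ m) = t ^ n * t ^ m * (1 - α ^ (p - 1)) ∧
            α ^ (3 * p) ≠ 0) :=
  stmt5_general hnm hN
end

section
/- Let p be a prime, K a finite extension of ℚ_p of degree N that is totally ramified (i.e. the ideal of 𝒪_K generated by p equals the N-th power of the maximal ideal of 𝒪_K, where N = [K:ℚ_p]), and let π be a uniformizer of 𝒪_K. Let n, m be natural numbers with 0 < n ≤ m and 3m < N. Then m = p^s·n for some s ∈ ℕ if and only if there exists α ∈ 𝒪_K such that α^p·(π^n − π^m) ≡ π^{n+m}·(1 − α^{p−1}) (mod p𝒪_K) and α^{3p} ≢ 0 (mod p𝒪_K). -/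
set_option synthInstance.maxHeartbeats 1000000
set_option maxHeartbeats 1000000

/-!
Dividing the congruence by `α ^ p * π ^ (n + m)` and putting `x = α⁻¹` turns it into the
Artin–Schreier equation `x ^ p - x = π ^ (-m) - π ^ (-n)` in the fraction field, up to a small
error. Although the field need not have characteristic `p`, the map `x ↦ x ^ p - x` is additive up
to `p` times terms whose poles are controlled by `3 * m < N`. If `m = p ^ s * n`, then the sum of
the `π ^ (-p ^ i * n)` over `i < s` is a solution, by telescoping. Conversely, subtracting such sums
replaces `m` and `n` by their prime-to-`p` parts, and a pole of `x ^ p - x` has order divisible by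
`p`, so these two parts agree.
-/

open WithZero

section ArtinSchreier

variable {L Γ₀ : Type*} [Field L] [LinearOrderedCommGroupWithZero Γ₀] {v : Valuation L Γ₀}
  {p : ℕ} {ε B : Γ₀}

lemma valuation_natCast_le_one {R : Type*} [CommRing R] (v : Valuation R Γ₀) (k : ℕ) :
    v k ≤ 1 :=
  natCast_mem v.integer k

lemma valuation_add_pow_prime_sub_le {R : Type*} [CommRing R] {v : Valuation R Γ₀}
    (hp : p.Prime) {x y : R} (hx : v x ^ p ≤ B) (hy : v y ^ p ≤ B) :
    v ((x + y) ^ p - (x ^ p + y ^ p)) ≤ v p * B := by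
  set γ := max (v x) (v y) with hγ
  have hγB : γ ^ p ≤ B := by
    rcases max_choice (v x) (v y) with h | h <;> rwa [hγ, h]
  rw [add_pow_prime_eq' hp, add_sub_cancel_left, map_mul]
  refine mul_le_mul_right (v.map_sum_le fun k hk ↦ ?_) _
  calc v (x ^ k * y ^ (p - k) * (p.choose k / p : ℕ))
      ≤ γ ^ k * γ ^ (p - k) * 1 := by
        simp only [map_mul, map_pow]
        gcongr
        · exact le_max_left _ _
        · exact le_max_right _ _
        · exact valuation_natCast_le_one v _
    _ = γ ^ p := by rw [mul_one, ← pow_add, Nat.add_sub_cancel' (Finset.mem_Ioo.1 hk).2.le]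
    _ ≤ B := hγB

/-- The approximate range of the Artin–Schreier map `x ↦ x ^ p - x`: the elements that agree with
some `x ^ p - x` up to an error of size at most `ε * B`, where `x` has size `v x ^ p ≤ B`. The bound
`v p ≤ ε` makes the Artin–Schreier map additive up to such errors, which is why this is a
subgroup. -/
def artinSchreierRange (hp : p.Prime) (hε : v p ≤ ε) (B : Γ₀) : AddSubgroup L where
  carrier := {z | ∃ x, v x ^ p ≤ B ∧ v (x ^ p - x - z) ≤ ε * B}
  zero_mem' := ⟨0, by simp [hp.ne_zero]⟩
  add_mem' := by
    rintro z w ⟨x, hx, hxz⟩ ⟨y, hy, hyw⟩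
    refine ⟨x + y, ?_, ?_⟩
    · rcases v.map_add' x y with h | h
      · exact (pow_le_pow_left' h p).trans hx
      · exact (pow_le_pow_left' h p).trans hy
    · have hxy := (valuation_add_pow_prime_sub_le hp hx hy).trans (mul_le_mul_left hε B)
      convert v.map_add_le hxy (v.map_add_le hxz hyw) using 2
      ring
  neg_mem' := by
    rintro z ⟨x, hx, hxz⟩
    have hx' : v (-x) ^ p ≤ B := by rwa [v.map_neg]
    refine ⟨-x, hx', ?_⟩
    have hneg := (valuation_add_pow_prime_sub_le hp hx hx').trans (mul_le_mul_left hε B)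
    rw [add_neg_cancel, zero_pow hp.ne_zero] at hneg
    rw [← v.map_neg]
    convert v.map_add_le hneg hxz using 2
    ring

lemma pow_sub_self_mem_artinSchreierRange (hp : p.Prime) (hε : v p ≤ ε) {x : L}
    (hx : v x ^ p ≤ B) : x ^ p - x ∈ artinSchreierRange hp hε B :=
  ⟨x, hx, by simp⟩

lemma pow_prime_pow_sub_self_mem_artinSchreierRange (hp : p.Prime) (hε : v p ≤ ε) {y : L}
    (hy : 1 ≤ v y) {s : ℕ} (hs : v y ^ p ^ s ≤ B) :
    y ^ p ^ s - y ∈ artinSchreierRange hp hε B := by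
  have telescope : ∑ i ∈ Finset.range s, ((y ^ p ^ i) ^ p - y ^ p ^ i) = y ^ p ^ s - y := by
    simp only [← pow_mul, ← pow_succ]
    rw [Finset.sum_range_sub (fun i ↦ y ^ p ^ i), pow_zero, pow_one]
  rw [← telescope]
  refine sum_mem fun i hi ↦ pow_sub_self_mem_artinSchreierRange hp hε ?_
  rw [map_pow, ← pow_mul, ← pow_succ]
  exact (pow_le_pow_right₀ hy
    (Nat.pow_le_pow_right hp.pos (Finset.mem_range.1 hi))).trans hs

lemma valuation_eq_pow_of_artinSchreier (hp : 1 < p) {x z : L} (hz : 1 < v z)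
    (h : v (x ^ p - x - z) ≤ 1) : v z = v x ^ p := by
  have hxz : v (x ^ p - x) = v z := v.map_eq_of_sub_lt (h.trans_lt hz)
  have hx : 1 < v x := by
    by_contra! hx
    have : v (x ^ p - x) ≤ 1 := v.map_sub_le (by simpa using pow_le_one' hx p) hx
    exact (this.trans_lt hz).ne hxz
  have hlt : v x < v (x ^ p) := by simpa using lt_self_pow₀ hx hp
  rw [← hxz, v.map_sub_eq_of_lt_left hlt, map_pow]

lemma inv_pow_mul_sub_eq_mul_artinSchreier (hp : p ≠ 0) {x t : L} (hx : x ≠ 0) (ht : t ≠ 0)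
    (n m : ℕ) :
    x⁻¹ ^ p * (t ^ n - t ^ m) - t ^ (n + m) * (1 - x⁻¹ ^ (p - 1)) =
      -(x⁻¹ ^ p * t ^ (n + m) * (x ^ p - x - ((t ^ m)⁻¹ - (t ^ n)⁻¹))) := by
  obtain ⟨q, rfl⟩ := Nat.exists_eq_succ_of_ne_zero hp
  rw [Nat.succ_eq_add_one, Nat.add_sub_cancel]
  simp only [inv_pow]
  field_simp
  ring

end ArtinSchreier

section Uniformizer

variable {L : Type*} [Field L] {v : Valuation L ℤᵐ⁰} {p : ℕ} {t : L} {n m N : ℕ}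

lemma ne_zero_of_uniformizer (ht : v t = exp (-1)) : t ≠ 0 :=
  v.ne_zero_iff.1 (ht ▸ exp_ne_zero)

lemma valuation_pow_of_uniformizer (ht : v t = exp (-1)) (k : ℕ) :
    v (t ^ k) = exp (-(k : ℤ)) := by
  rw [map_pow, ht, ← exp_nsmul]
  simp

lemma valuation_inv_pow_of_uniformizer (ht : v t = exp (-1)) (k : ℕ) :
    v (t ^ k)⁻¹ = exp (k : ℤ) := by
  rw [map_inv₀, valuation_pow_of_uniformizer ht, ← exp_neg, neg_neg]

lemma valuation_inv_pow_sub_inv_pow (ht : v t = exp (-1)) (hnm : n < m) :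
    v ((t ^ m)⁻¹ - (t ^ n)⁻¹) = exp (m : ℤ) := by
  rw [v.map_sub_eq_of_lt_left, valuation_inv_pow_of_uniformizer ht]
  simpa only [valuation_inv_pow_of_uniformizer ht, exp_lt_exp, Nat.cast_lt] using hnm

lemma one_lt_valuation_inv_pow_sub_inv_pow (ht : v t = exp (-1)) (hnm : n < m) :
    1 < v ((t ^ m)⁻¹ - (t ^ n)⁻¹) := by
  rw [valuation_inv_pow_sub_inv_pow ht hnm, ← exp_zero, exp_lt_exp]
  omega

lemma inv_pow_prime_pow_sub_mem_artinSchreierRange (hp : p.Prime) {ε B : ℤᵐ⁰} (hε : v p ≤ ε)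
    (ht : v t = exp (-1)) {s : ℕ} (hB : exp ((p ^ s * n : ℕ) : ℤ) ≤ B) :
    (t ^ (p ^ s * n))⁻¹ - (t ^ n)⁻¹ ∈ artinSchreierRange hp hε B := by
  have hpow : (t ^ (p ^ s * n))⁻¹ = (t ^ n)⁻¹ ^ p ^ s := by rw [inv_pow, ← pow_mul, mul_comm]
  rw [hpow]
  refine pow_prime_pow_sub_self_mem_artinSchreierRange hp hε ?_ ?_
  · rw [valuation_inv_pow_of_uniformizer ht, ← exp_zero, exp_le_exp]
    positivity
  · rwa [← map_pow, ← hpow, valuation_inv_pow_of_uniformizer ht]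

lemma dvd_of_inv_pow_sub_inv_pow_mem_artinSchreierRange (hp : p.Prime) {ε B : ℤᵐ⁰}
    (hε : v p ≤ ε) (hεB : ε * B ≤ 1) (ht : v t = exp (-1)) (hnm : n < m)
    (h : (t ^ m)⁻¹ - (t ^ n)⁻¹ ∈ artinSchreierRange hp hε B) : p ∣ m := by
  obtain ⟨x, -, hx⟩ := h
  have hpole : exp (m : ℤ) = v x ^ p := by
    rw [← valuation_inv_pow_sub_inv_pow ht hnm]
    exact valuation_eq_pow_of_artinSchreier hp.one_lt
      (one_lt_valuation_inv_pow_sub_inv_pow ht hnm) (hx.trans hεB)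
  have hlog : (m : ℤ) = p * log (v x) := by simpa using congrArg log hpole
  exact Int.natCast_dvd_natCast.1 ⟨_, hlog⟩

lemma eq_of_inv_pow_sub_inv_pow_mem_artinSchreierRange (hp : p.Prime) {ε B : ℤᵐ⁰}
    (hε : v p ≤ ε) (hεB : ε * B ≤ 1) (ht : v t = exp (-1)) (hn : ¬p ∣ n) (hm : ¬p ∣ m)
    (h : (t ^ m)⁻¹ - (t ^ n)⁻¹ ∈ artinSchreierRange hp hε B) : n = m := by
  rcases lt_trichotomy n m with hlt | heq | hgt
  · exact absurd (dvd_of_inv_pow_sub_inv_pow_mem_artinSchreierRange hp hε hεB ht hlt h) hm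
  · exact heq
  · rw [← neg_mem_iff, neg_sub] at h
    exact absurd (dvd_of_inv_pow_sub_inv_pow_mem_artinSchreierRange hp hε hεB ht hgt h) hn

lemma exists_eq_prime_pow_mul_of_mem_artinSchreierRange (hp : p.Prime) {ε B : ℤᵐ⁰}
    (hε : v p ≤ ε) (hεB : ε * B ≤ 1) (ht : v t = exp (-1)) (hn : 0 < n) (hnm : n ≤ m)
    (hB : exp (m : ℤ) ≤ B) (h : (t ^ m)⁻¹ - (t ^ n)⁻¹ ∈ artinSchreierRange hp hε B) :
    ∃ s : ℕ, m = p ^ s * n := by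
  obtain ⟨a, n', hn', rfl⟩ := Nat.exists_eq_pow_mul_and_not_dvd hn.ne' p hp.ne_one
  obtain ⟨b, m', hm', rfl⟩ := Nat.exists_eq_pow_mul_and_not_dvd (hn.trans_le hnm).ne' p hp.ne_one
  have hnB : exp ((p ^ a * n' : ℕ) : ℤ) ≤ B := (exp_le_exp.2 (by exact_mod_cast hnm)).trans hB
  have hmem : (t ^ m')⁻¹ - (t ^ n')⁻¹ ∈ artinSchreierRange hp hε B := by
    have hm_mem := inv_pow_prime_pow_sub_mem_artinSchreierRange hp hε ht hB
    have hn_mem := inv_pow_prime_pow_sub_mem_artinSchreierRange hp hε ht hnB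
    convert add_mem (sub_mem h hm_mem) hn_mem using 1
    ring
  obtain rfl := eq_of_inv_pow_sub_inv_pow_mem_artinSchreierRange hp hε hεB ht hn' hm' hmem
  have hn'_pos : 0 < n' := Nat.pos_of_mul_pos_left hn
  have hab : a ≤ b :=
    (Nat.pow_le_pow_iff_right hp.one_lt).1 (Nat.le_of_mul_le_mul_right hnm hn'_pos)
  exact ⟨b - a, by rw [← mul_assoc, ← pow_add, Nat.sub_add_cancel hab]⟩

lemma exists_solution_of_mem_artinSchreierRange (hp : p.Prime) (hpN : v p ≤ exp (-(N : ℤ)))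
    (ht : v t = exp (-1)) (hnm : n < m) (hmN : 3 * m < N)
    (h : (t ^ m)⁻¹ - (t ^ n)⁻¹ ∈ artinSchreierRange hp hpN (exp (m : ℤ))) :
    ∃ α : L, v α ≤ 1 ∧
      v (α ^ p * (t ^ n - t ^ m) - t ^ (n + m) * (1 - α ^ (p - 1))) ≤ exp (-(N : ℤ)) ∧
      exp (-(N : ℤ)) < v (α ^ (3 * p)) := by
  obtain ⟨x, -, hx⟩ := h
  have hxp : v x ^ p = exp (m : ℤ) := by
    rw [← valuation_inv_pow_sub_inv_pow ht hnm]
    refine (valuation_eq_pow_of_artinSchreier hp.one_lt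
      (one_lt_valuation_inv_pow_sub_inv_pow ht hnm) (hx.trans ?_)).symm
    rw [← exp_add, ← exp_zero, exp_le_exp]
    omega
  have hαp : v (x⁻¹ ^ p) = exp (-(m : ℤ)) := by rw [map_pow, map_inv₀, inv_pow, hxp, exp_neg]
  have hx0 : x ≠ 0 := by
    rintro rfl
    rw [map_zero, zero_pow hp.ne_zero] at hxp
    exact exp_ne_zero hxp.symm
  refine ⟨x⁻¹, ?_, ?_, ?_⟩
  · rw [← pow_le_one_iff hp.ne_zero, ← map_pow, hαp, ← exp_zero, exp_le_exp]
    omega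
  · rw [inv_pow_mul_sub_eq_mul_artinSchreier hp.ne_zero hx0 (ne_zero_of_uniformizer ht),
      v.map_neg, map_mul, map_mul, hαp, valuation_pow_of_uniformizer ht]
    refine (mul_le_mul_right hx _).trans ?_
    simp only [← exp_add, exp_le_exp]
    omega
  · rw [mul_comm, pow_mul, map_pow, hαp, ← exp_nsmul, exp_lt_exp, nsmul_eq_mul]
    omega

lemma mem_artinSchreierRange_of_solution (hp : p.Prime) (hpN : v p ≤ exp (-(N : ℤ)))
    (ht : v t = exp (-1)) (hnm : n ≤ m) (hmN : 3 * m < N) {α : L}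
    (hα : v (α ^ p * (t ^ n - t ^ m) - t ^ (n + m) * (1 - α ^ (p - 1))) ≤ exp (-(N : ℤ)))
    (hαN : exp (-(N : ℤ)) < v (α ^ (3 * p))) :
    (t ^ m)⁻¹ - (t ^ n)⁻¹ ∈ artinSchreierRange hp hpN (exp (N : ℤ)) := by
  have hα0 : α ≠ 0 := by
    rintro rfl
    simp [hp.ne_zero] at hαN
  obtain ⟨a, ha⟩ : ∃ a : ℤ, exp a = v (α ^ p) :=
    ⟨_, exp_log (v.ne_zero_iff.2 (pow_ne_zero p hα0))⟩
  have haN : -(N : ℤ) < 3 * a := by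
    rw [mul_comm, pow_mul, map_pow, ← ha, ← exp_nsmul, exp_lt_exp, nsmul_eq_mul] at hαN
    exact_mod_cast hαN
  refine ⟨α⁻¹, ?_, ?_⟩
  · rw [← map_pow, inv_pow, map_inv₀, ← ha, ← exp_neg, exp_le_exp]
    omega
  · have hE := inv_pow_mul_sub_eq_mul_artinSchreier hp.ne_zero (inv_ne_zero hα0)
      (ne_zero_of_uniformizer ht) n m
    rw [inv_inv] at hE
    rw [hE, v.map_neg, map_mul, map_mul, ← ha, valuation_pow_of_uniformizer ht, ← exp_add] at hα
    rw [← exp_add, neg_add_cancel, exp_zero]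
    by_contra! hlt
    refine hα.not_gt (lt_of_lt_of_le ?_ (mul_le_mul_right hlt.le _))
    rw [mul_one, exp_lt_exp]
    omega

end Uniformizer

section DiscreteValuationRing

open IsLocalRing

variable {R : Type*} [CommRing R] [IsDomain R] [IsDiscreteValuationRing R]

lemma mem_maximalIdeal_pow_iff_valuation_le (r : R) (N : ℕ) :
    r ∈ maximalIdeal R ^ N ↔
      (IsDiscreteValuationRing.maximalIdeal R).valuation (FractionRing R)
        (algebraMap R (FractionRing R) r) ≤ exp (-(N : ℤ)) := by
  rw [IsDedekindDomain.HeightOneSpectrum.valuation_of_algebraMap]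
  exact ((IsDiscreteValuationRing.maximalIdeal R).intValuation_le_pow_iff_mem r N).symm

lemma valuation_algebraMap_irreducible {π : R} (hπ : Irreducible π) :
    (IsDiscreteValuationRing.maximalIdeal R).valuation (FractionRing R)
      (algebraMap R (FractionRing R) π) = exp (-1) := by
  rw [IsDedekindDomain.HeightOneSpectrum.valuation_of_algebraMap]
  exact IsDedekindDomain.HeightOneSpectrum.intValuation_singleton _ hπ.ne_zero hπ.maximalIdeal_eq

theorem stmt8_general {p : ℕ} (hp : p.Prime) {π : R} (hπ : Irreducible π) {N n m : ℕ}
    (hpN : (p : R) ∈ maximalIdeal R ^ N) (hn : 0 < n) (hnm : n ≤ m) (hmN : 3 * m < N) :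
    (∃ s : ℕ, m = p ^ s * n) ↔
      ∃ α : R,
        α ^ p * (π ^ n - π ^ m) - π ^ (n + m) * (1 - α ^ (p - 1)) ∈ maximalIdeal R ^ N ∧
        α ^ (3 * p) ∉ maximalIdeal R ^ N := by
  set v := (IsDiscreteValuationRing.maximalIdeal R).valuation (FractionRing R) with hv
  have ht := valuation_algebraMap_irreducible hπ
  have hpv : v p ≤ exp (-(N : ℤ)) := by
    simpa using (mem_maximalIdeal_pow_iff_valuation_le _ N).1 hpN
  simp only [mem_maximalIdeal_pow_iff_valuation_le, not_le, ← hv]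
  simp only [map_sub (algebraMap R _), map_mul (algebraMap R _), map_pow (algebraMap R _),
    map_one (algebraMap R _)]
  constructor
  · rintro ⟨s, rfl⟩
    rcases hnm.eq_or_lt with heq | hlt
    · refine ⟨1, ?_, ?_⟩
      · simp [← heq]
      · rw [map_one, one_pow, map_one, ← exp_zero, exp_lt_exp]
        omega
    · obtain ⟨x, hx, hcong, hlarge⟩ := exists_solution_of_mem_artinSchreierRange hp hpv ht hlt hmN
        (inv_pow_prime_pow_sub_mem_artinSchreierRange hp hpv ht le_rfl)
      obtain ⟨α, rfl⟩ := IsDiscreteValuationRing.exists_lift_of_le_one hx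
      exact ⟨α, hcong, hlarge⟩
  · rintro ⟨α, hcong, hlarge⟩
    have hunit : exp (-(N : ℤ)) * exp (N : ℤ) ≤ 1 := by rw [← exp_add, neg_add_cancel, exp_zero]
    have hm_le : exp (m : ℤ) ≤ exp (N : ℤ) := exp_le_exp.2 (by omega)
    exact exists_eq_prime_pow_mul_of_mem_artinSchreierRange hp hpv hunit ht hn hnm hm_le
      (mem_artinSchreierRange_of_solution hp hpv ht hnm hmN hcong hlarge)

end DiscreteValuationRing

lemma isDiscreteValuationRing_integralClosure (A K L : Type*) [CommRing A] [IsDedekindDomain A]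
    (hA : ¬IsField A) [Field K] [Algebra A K] [IsFractionRing A K] [Field L] [Algebra K L]
    [Algebra A L] [IsScalarTower A K L] [FiniteDimensional K L] [Algebra.IsSeparable K L]
    [IsLocalRing (integralClosure A L)] : IsDiscreteValuationRing (integralClosure A L) := by
  have hDedekind : IsDedekindDomain (integralClosure A L) :=
    integralClosure.isDedekindDomain A K L
  have : FaithfulSMul A L := by
    rw [faithfulSMul_iff_algebraMap_injective, IsScalarTower.algebraMap_eq A K L]
    exact (algebraMap K L).injective.comp (IsFractionRing.injective A K)
  have hfield : ¬IsField (integralClosure A L) := by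
    rwa [← Algebra.IsIntegral.isField_iff_isField
      (FaithfulSMul.algebraMap_injective A (integralClosure A L))]
  exact ((IsDiscreteValuationRing.TFAE (integralClosure A L) hfield).out 0 2).2 hDedekind

theorem stmt8 (p : ℕ) [Fact p.Prime] (K : Type*) [Field K] [Algebra ℚ_[p] K]
    [FiniteDimensional ℚ_[p] K]
    [Algebra ℤ_[p] K] [IsScalarTower ℤ_[p] ℚ_[p] K]
    (N : ℕ) (hN : N = Module.finrank ℚ_[p] K)
    [IsLocalRing (integralClosure ℤ_[p] K)]
    (htr : Ideal.span {(p : integralClosure ℤ_[p] K)} =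
      (IsLocalRing.maximalIdeal (integralClosure ℤ_[p] K)) ^ N)
    (π : integralClosure ℤ_[p] K)
    (hπ : Ideal.span {π} = IsLocalRing.maximalIdeal (integralClosure ℤ_[p] K))
    (n m : ℕ) (hn : 0 < n) (hnm : n ≤ m) (hmN : 3 * m < N) :
    (∃ s : ℕ, m = p ^ s * n) ↔
      ∃ α : integralClosure ℤ_[p] K,
        α ^ p * (π ^ n - π ^ m) - π ^ (n + m) * (1 - α ^ (p - 1)) ∈
          Ideal.span {(p : integralClosure ℤ_[p] K)} ∧
        α ^ (3 * p) ∉ Ideal.span {(p : integralClosure ℤ_[p] K)} := by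
  have : IsDiscreteValuationRing (integralClosure ℤ_[p] K) :=
    isDiscreteValuationRing_integralClosure ℤ_[p] ℚ_[p] K (IsDiscreteValuationRing.not_isField _)
  have hp_mem := Ideal.mem_span_singleton_self (p : integralClosure ℤ_[p] K)
  rw [htr] at hp_mem ⊢
  exact stmt8_general Fact.out ((IsDiscreteValuationRing.irreducible_iff_uniformizer π).2 hπ.symm)
    hp_mem hn hnm hmN
end

section
/- Let p be a prime. Let A = 𝔽_p[t^{1/∞}] be the monoid algebra of the additive monoid ℚ_{≥0} of nonnegative rationals over 𝔽_p (the ring of 'polynomials in all rational powers t^q, q ∈ ℚ_{≥0}'), and let R = A/(t), the quotient of A by the ideal generated by the monomial t = t^1 (the basis element corresponding to 1 ∈ ℚ_{≥0}). Then for every existential sentence φ of the first-order language of rings (i.e. φ is the existential closure of a quantifier-free formula), R satisfies φ if and only if 𝔽_p[X]/(X^N) satisfies φ for all sufficiently large natural numbers N. -/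
open FirstOrder FirstOrder.Ring Polynomial

/-!
Existential sentences pass from a structure to any extension, and an existential sentence that holds
in a union of substructures covering every finite tuple already holds in one of them.

Sending `X` to `t ^ (1 / m)` embeds `K[X] / (X ^ m)` into `R = K[t ^ (1 / ∞)] / (t)`. Finitely many
elements of `R` involve finitely many exponents, which have a common denominator `m`, so they lie in
the image of one such embedding. Hence an existential sentence holds in `R` iff it holds in some
`K[X] / (X ^ m)` with `0 < m`. Finally `K[X] / (X ^ m)` embeds into `K[X] / (X ^ N)` by
`X ↦ X ^ e` as soon as `e * (m - 1) < N ≤ e * m`, and such an `e` exists for all `N ≥ m ^ 2`.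
-/

section ModelTheory

variable {L : Language} {k : ℕ} {ψ : L.BoundedFormula Empty k}

theorem models_exs_of_embedding {M N : Type*} [L.Structure M] [L.Structure N] (hψ : ψ.IsQF)
    (f : M ↪[L] N) (hM : M ⊨ ψ.exs) : N ⊨ ψ.exs := by
  obtain ⟨xs, hxs⟩ := Language.BoundedFormula.realize_exs.mp hM
  refine Language.BoundedFormula.realize_exs.mpr ⟨f ∘ xs, ?_⟩
  rw [Subsingleton.elim default (f ∘ default)]
  exact (hψ.realize_embedding f).mpr hxs

theorem models_exs_iff_exists_of_embeddings_cover {ι N : Type*} {M : ι → Type*}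
    [L.Structure N] [∀ i, L.Structure (M i)] (hψ : ψ.IsQF) (f : ∀ i, M i ↪[L] N)
    (hcover : ∀ xs : Fin k → N, ∃ i, ∀ j, xs j ∈ Set.range (f i)) :
    N ⊨ ψ.exs ↔ ∃ i, M i ⊨ ψ.exs := by
  refine ⟨fun hN => ?_, fun ⟨i, hi⟩ => models_exs_of_embedding hψ (f i) hi⟩
  obtain ⟨xs, hxs⟩ := Language.BoundedFormula.realize_exs.mp hN
  obtain ⟨i, hi⟩ := hcover xs
  choose ys hys using hi
  obtain rfl : f i ∘ ys = xs := funext hys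
  rw [Subsingleton.elim default (f i ∘ default), hψ.realize_embedding] at hxs
  exact ⟨i, Language.BoundedFormula.realize_exs.mpr ⟨ys, hxs⟩⟩

/-- An injective ring homomorphism, as an embedding of structures for the language of rings. -/
def languageEmbeddingOfInjective {S T : Type*} [NonAssocRing S] [NonAssocRing T]
    [CompatibleRing S] [CompatibleRing T] (f : S →+* T) (hf : Function.Injective f) :
    S ↪[Language.ring] T where
  toFun := f
  inj' := hf
  map_fun' g _ := by cases g <;> simp
  map_rel' r := by cases r

end ModelTheory

theorem exists_mul_lt_and_le_mul_succ {n N : ℕ} (hN : (n + 1) ^ 2 ≤ N) :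
    ∃ e : ℕ, e * n < N ∧ N ≤ e * (n + 1) := by
  have hquot : n + 1 ≤ N / (n + 1) := (Nat.le_div_iff_mul_le n.succ_pos).mpr (by rwa [← sq])
  have hdiv : N / (n + 1) * (n + 1) ≤ N := Nat.div_mul_le_self N (n + 1)
  have hlt : N < (N / (n + 1) + 1) * (n + 1) := Nat.lt_mul_of_div_lt (Nat.lt_succ_self _) n.succ_pos
  exact ⟨N / (n + 1) + 1, by lia, hlt.le⟩

theorem exists_forall_mem_multiples_inv (s : Finset ℚ≥0) :
    ∃ n : ℕ, ∀ q ∈ s, q ∈ AddSubmonoid.multiples ((n + 1 : ℕ) : ℚ≥0)⁻¹ := by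
  have hpos : 0 < ∏ q ∈ s, q.den := Finset.prod_pos fun q _ => q.den_pos
  refine ⟨(∏ q ∈ s, q.den) - 1, fun q hq => ?_⟩
  rw [Nat.sub_add_cancel hpos]
  obtain ⟨c, hc⟩ := Finset.dvd_prod_of_mem NNRat.den hq
  rw [hc] at hpos ⊢
  have hden : (q.den : ℚ≥0) ≠ 0 := Nat.cast_ne_zero.mpr q.den_ne_zero
  have hc0 : (c : ℚ≥0) ≠ 0 := Nat.cast_ne_zero.mpr (Nat.pos_of_mul_pos_left hpos).ne'
  refine ⟨q.num * c, ?_⟩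
  calc (q.num * c) • ((q.den * c : ℕ) : ℚ≥0)⁻¹ = q.num / q.den := by
        rw [nsmul_eq_mul]
        push_cast
        field_simp
    _ = q := q.num_div_den

theorem coeff_eq_zero_of_single_dvd {K G : Type*} [Semiring K] [AddSemigroup G]
    {a g : G} {r : K} {f : AddMonoidAlgebra K G}
    (hdvd : AddMonoidAlgebra.single a r ∣ f) (hg : ∀ d, a + d ≠ g) : f.coeff g = 0 := by
  obtain ⟨h, rfl⟩ := hdvd
  exact AddMonoidAlgebra.coeff_single_mul_of_forall_add_ne r h hg

theorem mem_range_aeval_single {K G : Type*} [CommSemiring K] [AddCommMonoid G]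
    {a : G} {f : AddMonoidAlgebra K G}
    (hf : ∀ g ∈ f.coeff.support, g ∈ AddSubmonoid.multiples a) :
    f ∈ (aeval (R := K) (AddMonoidAlgebra.single a (1 : K))).range := by
  rw [← AddMonoidAlgebra.sum_coeff_single f]
  refine sum_mem fun g hg => ?_
  obtain ⟨j, rfl⟩ := hf g hg
  refine ⟨monomial j (f.coeff (j • a)), ?_⟩
  simp [aeval_monomial, AddMonoidAlgebra.single_pow]

/-- The truncated polynomial ring `K[X] / (X ^ N)`; it is the zero ring for `N = 0`. -/
abbrev TruncatedPolynomial (K : Type*) [CommRing K] (N : ℕ) : Type _ :=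
  K[X] ⧸ Ideal.span {(X : K[X]) ^ N}

/-- The ring `K[t ^ (1 / ∞)] / (t)` of polynomials in the nonnegative rational powers of `t`,
truncated at `t`. The power `t ^ q` is the class of `AddMonoidAlgebra.single q 1`. -/
abbrev TruncatedPuiseux (K : Type*) [CommRing K] : Type _ :=
  AddMonoidAlgebra K ℚ≥0 ⧸ Ideal.span {AddMonoidAlgebra.single (1 : ℚ≥0) (1 : K)}

variable {K : Type*} [CommRing K]

namespace TruncatedPolynomial

variable {B : Type*} [Ring B] [Algebra K B] {x : B} {n : ℕ}

/-- The `K`-algebra homomorphism `K[X] / (X ^ N) → B` sending `X` to an element `x` with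
`x ^ N = 0`. -/
noncomputable def lift {N : ℕ} (x : B) (hx : x ^ N = 0) : TruncatedPolynomial K N →ₐ[K] B :=
  Ideal.Quotient.liftₐ _ (aeval x) fun P hP => by
    obtain ⟨Q, rfl⟩ := Ideal.mem_span_singleton.mp hP
    rw [map_mul, map_pow, aeval_X, hx, zero_mul]

theorem lift_mk {N : ℕ} (hx : x ^ N = 0) (P : K[X]) :
    lift x hx (Ideal.Quotient.mk _ P) = aeval x P :=
  rfl

theorem coeff_zero_smul_pow_eq_pow_mul_aeval (hx : x ^ (n + 1) = 0) (Q : K[X]) :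
    Q.coeff 0 • x ^ n = x ^ n * aeval x Q := by
  calc Q.coeff 0 • x ^ n
      = x ^ (n + 1) * aeval x Q.divX + x ^ n * algebraMap K B (Q.coeff 0) := by
        rw [hx, zero_mul, zero_add, Algebra.smul_def, Algebra.commutes]
    _ = x ^ n * aeval x (X * Q.divX + C (Q.coeff 0)) := by
        rw [map_add, map_mul, aeval_X, aeval_C, mul_add, pow_succ, mul_assoc]
    _ = x ^ n * aeval x Q := by rw [X_mul_divX_add]

theorem X_pow_dvd_of_aeval_eq_zero (hx : x ^ (n + 1) = 0)
    (hinj : ∀ c : K, c • x ^ n = 0 → c = 0) {P : K[X]} (hP : aeval x P = 0) :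
    X ^ (n + 1) ∣ P := by
  suffices h : ∀ d ≤ n + 1, X ^ d ∣ P from h _ le_rfl
  intro d hd
  induction d with
  | zero => exact one_dvd P
  | succ d ih =>
    obtain ⟨Q, rfl⟩ := ih (by lia)
    -- Multiplying `x ^ d * aeval x Q = 0` by `x ^ (n - d)` kills all but the lowest coefficient.
    have hQ : x ^ n * aeval x Q = 0 := by
      rw [map_mul, map_pow, aeval_X] at hP
      rw [← Nat.sub_add_cancel (Nat.le_of_succ_le_succ hd), pow_add, mul_assoc, hP, mul_zero]
    have hcoeff : Q.coeff 0 = 0 :=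
      hinj _ ((coeff_zero_smul_pow_eq_pow_mul_aeval hx Q).trans hQ)
    rw [pow_succ]
    exact mul_dvd_mul_left _ (X_dvd_iff.mpr hcoeff)

theorem lift_injective (hx : x ^ (n + 1) = 0) (hinj : ∀ c : K, c • x ^ n = 0 → c = 0) :
    Function.Injective (lift (K := K) x hx) := by
  refine (injective_iff_map_eq_zero _).mpr fun y hy => ?_
  obtain ⟨P, rfl⟩ := Ideal.Quotient.mk_surjective y
  rw [lift_mk] at hy
  exact Ideal.Quotient.eq_zero_iff_dvd _ _ |>.mpr (X_pow_dvd_of_aeval_eq_zero hx hinj hy)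

theorem exists_injective_of_sq_le {N : ℕ} (hN : (n + 1) ^ 2 ≤ N) :
    ∃ f : TruncatedPolynomial K (n + 1) →ₐ[K] TruncatedPolynomial K N,
      Function.Injective f := by
  obtain ⟨e, hlt, hle⟩ := exists_mul_lt_and_le_mul_succ hN
  have hzero : (Ideal.Quotient.mk (Ideal.span {(X : K[X]) ^ N}) (X ^ e)) ^ (n + 1) = 0 := by
    rw [← map_pow, ← pow_mul, Ideal.Quotient.eq_zero_iff_dvd]
    exact pow_dvd_pow X hle
  refine ⟨lift _ hzero, lift_injective hzero fun c hc => ?_⟩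
  rw [← map_pow, ← pow_mul, ← Ideal.Quotient.mkₐ_eq_mk K, ← map_smul, Ideal.Quotient.mkₐ_eq_mk,
    Ideal.Quotient.eq_zero_iff_dvd, X_pow_dvd_iff] at hc
  simpa using hc (e * n) hlt

end TruncatedPolynomial

namespace TruncatedPuiseux

variable (K) in
/-- The class of the monomial `t ^ q` in `K[t ^ (1 / ∞)] / (t)`. -/
noncomputable def tPow (q : ℚ≥0) : TruncatedPuiseux K :=
  Ideal.Quotient.mkₐ K _ (AddMonoidAlgebra.single q 1)

theorem tPow_pow (q : ℚ≥0) (n : ℕ) : tPow K q ^ n = tPow K (n * q) := by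
  rw [tPow, ← map_pow, AddMonoidAlgebra.single_pow, one_pow, nsmul_eq_mul, tPow]

theorem tPow_one : tPow K 1 = 0 :=
  Ideal.Quotient.eq_zero_iff_mem.mpr (Ideal.mem_span_singleton_self _)

theorem eq_zero_of_smul_tPow_eq_zero {q : ℚ≥0} (hq : q < 1) {c : K} (hc : c • tPow K q = 0) :
    c = 0 := by
  rw [tPow, ← map_smul, Ideal.Quotient.mkₐ_eq_mk, Ideal.Quotient.eq_zero_iff_dvd] at hc
  have hcoeff := coeff_eq_zero_of_single_dvd hc fun d (hd : 1 + d = q) =>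
    hq.not_ge (hd ▸ le_self_add)
  simpa using hcoeff

theorem tPow_inv_pow_succ (n : ℕ) : tPow K ((n + 1 : ℕ) : ℚ≥0)⁻¹ ^ (n + 1) = 0 := by
  rw [tPow_pow, mul_inv_cancel₀ (Nat.cast_ne_zero.mpr n.succ_ne_zero), tPow_one]

variable (K) in
/-- The homomorphism `K[X] / (X ^ (n + 1)) → K[t ^ (1 / ∞)] / (t)` sending `X` to
`t ^ (1 / (n + 1))`. -/
noncomputable def ofTruncatedPolynomial (n : ℕ) :
    TruncatedPolynomial K (n + 1) →ₐ[K] TruncatedPuiseux K :=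
  TruncatedPolynomial.lift (tPow K ((n + 1 : ℕ) : ℚ≥0)⁻¹) (tPow_inv_pow_succ n)

theorem ofTruncatedPolynomial_injective (n : ℕ) :
    Function.Injective (ofTruncatedPolynomial K n) := by
  refine TruncatedPolynomial.lift_injective _ fun c hc => ?_
  have hlt : (n : ℚ≥0) * ((n + 1 : ℕ) : ℚ≥0)⁻¹ < 1 := by
    rw [← div_eq_mul_inv, div_lt_one (Nat.cast_pos.mpr n.succ_pos)]
    exact Nat.cast_lt.mpr n.lt_succ_self
  rw [tPow_pow] at hc
  exact eq_zero_of_smul_tPow_eq_zero hlt hc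

theorem mk_mem_range_ofTruncatedPolynomial {n : ℕ} {f : AddMonoidAlgebra K ℚ≥0}
    (hf : ∀ q ∈ f.coeff.support, q ∈ AddSubmonoid.multiples ((n + 1 : ℕ) : ℚ≥0)⁻¹) :
    (Ideal.Quotient.mk _ f : TruncatedPuiseux K) ∈ Set.range (ofTruncatedPolynomial K n) := by
  obtain ⟨P, rfl⟩ := mem_range_aeval_single hf
  exact ⟨Ideal.Quotient.mk _ P, aeval_algHom_apply (Ideal.Quotient.mkₐ K _) _ P⟩

theorem exists_forall_mem_range_ofTruncatedPolynomial {ι : Type*} [Finite ι]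
    (xs : ι → TruncatedPuiseux K) :
    ∃ n, ∀ i, xs i ∈ Set.range (ofTruncatedPolynomial K n) := by
  classical
  have := Fintype.ofFinite ι
  choose fs hfs using fun i => Ideal.Quotient.mk_surjective (xs i)
  obtain ⟨n, hn⟩ :=
    exists_forall_mem_multiples_inv (Finset.univ.biUnion fun i => (fs i).coeff.support)
  refine ⟨n, fun i => hfs i ▸ mk_mem_range_ofTruncatedPolynomial fun q hq => hn q ?_⟩
  exact Finset.mem_biUnion.mpr ⟨i, Finset.mem_univ i, hq⟩

end TruncatedPuiseux

theorem stmt9_general [CompatibleRing (TruncatedPuiseux K)]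
    [∀ N, CompatibleRing (TruncatedPolynomial K N)] {k : ℕ}
    {ψ : Language.ring.BoundedFormula Empty k} (hψ : ψ.IsQF) :
    TruncatedPuiseux K ⊨ ψ.exs ↔
      ∃ N₀ : ℕ, ∀ N : ℕ, N₀ ≤ N → TruncatedPolynomial K N ⊨ ψ.exs := by
  have hunion : TruncatedPuiseux K ⊨ ψ.exs ↔ ∃ n, TruncatedPolynomial K (n + 1) ⊨ ψ.exs :=
    models_exs_iff_exists_of_embeddings_cover hψ
      (fun n => languageEmbeddingOfInjective (TruncatedPuiseux.ofTruncatedPolynomial K n).toRingHom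
        (TruncatedPuiseux.ofTruncatedPolynomial_injective n))
      TruncatedPuiseux.exists_forall_mem_range_ofTruncatedPolynomial
  rw [hunion]
  constructor
  · rintro ⟨n, hn⟩
    refine ⟨(n + 1) ^ 2, fun N hN => ?_⟩
    obtain ⟨f, hf⟩ := TruncatedPolynomial.exists_injective_of_sq_le (K := K) hN
    exact models_exs_of_embedding hψ (languageEmbeddingOfInjective f.toRingHom hf) hn
  · rintro ⟨N₀, hN₀⟩
    exact ⟨N₀, hN₀ (N₀ + 1) N₀.le_succ⟩

theorem stmt9 (p : ℕ) [Fact p.Prime] (k : ℕ)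
    (ψ : FirstOrder.Language.ring.BoundedFormula Empty k) (hψ : ψ.IsQF) :
    letI R := AddMonoidAlgebra (ZMod p) ℚ≥0 ⧸
      Ideal.span {AddMonoidAlgebra.single (1 : ℚ≥0) (1 : ZMod p)}
    letI : CompatibleRing R := compatibleRingOfRing R
    letI : ∀ N : ℕ, CompatibleRing (Polynomial (ZMod p) ⧸
        Ideal.span {(X : Polynomial (ZMod p)) ^ N}) :=
      fun N => compatibleRingOfRing _
    (R ⊨ ψ.exs ↔ ∃ N₀ : ℕ, ∀ N : ℕ, N₀ ≤ N →
      (Polynomial (ZMod p) ⧸ Ideal.span {(X : Polynomial (ZMod p)) ^ N}) ⊨ ψ.exs) := by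
  let _ : CompatibleRing (TruncatedPuiseux (ZMod p)) := compatibleRingOfRing _
  let _ (N : ℕ) : CompatibleRing (TruncatedPolynomial (ZMod p) N) := compatibleRingOfRing _
  exact stmt9_general hψ
end
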